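/- Let (u_f) be a follower utility matrix for a game with m ≥ 1 leader actions, n ≥ 2 follower actions, values in [0,1], and inducibility gap Δ > 0. For S ⊆ [n] and δ > 0, let X(δ; S) = {x ∈ Δ^m : BR_δ(x) = S}. Then for every follower action j ∈ [n] and every δ ∈ (0, Δ): X(δ; {j}) is nonempty, and for every δ' ∈ (δ, Δ) the inclusion X(δ'; {j}) ⊂ X(δ; {j}) is strict (X(δ'; {j}) ⊆ X(δ; {j}) and there exists a point of X(δ; {j}) not in X(δ'; {j})). -/

import Mathlib

open Finset Set

noncomputable section

/-- The simplex of mixed strategies over `m` actions. -/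
def simplex (m : ℕ) : Set (Fin m → ℝ) := stdSimplex ℝ (Fin m)

/-- Mixed-strategy extension of a utility matrix: `u(x, j) = ∑ i, x i * u i j`. -/
def mixU {m n : ℕ} (u : Fin m → Fin n → ℝ) (x : Fin m → ℝ) (j : Fin n) : ℝ :=
  ∑ i, x i * u i j

/-- The follower's δ-optimal response set (strict inequality):
`BR_δ(x) = {j : u_f(x,j) > max_{j'} u_f(x,j') - δ}`. -/
def BRd {m n : ℕ} (uf : Fin m → Fin n → ℝ) (δ : ℝ) (x : Fin m → ℝ) : Set (Fin n) :=
  {j | mixU uf x j > (⨆ j', mixU uf x j') - δ}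

/-- The follower's exact best-response set. -/
def BR0 {m n : ℕ} (uf : Fin m → Fin n → ℝ) (x : Fin m → ℝ) : Set (Fin n) :=
  {j | mixU uf x j = ⨆ j', mixU uf x j'}

/-- Worst-case leader utility over the follower's δ-optimal response set:
`min_{j ∈ BR_δ(x)} u_l(x, j)`. -/
def valBR {m n : ℕ} (ul uf : Fin m → Fin n → ℝ) (δ : ℝ) (x : Fin m → ℝ) : ℝ :=
  sInf (mixU ul x '' BRd uf δ x)

/-- The δ-RSE leader utility `u_RSE(δ) = sup_{x ∈ Δ^m} min_{j ∈ BR_δ(x)} u_l(x, j)`. -/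
def uRSE {m n : ℕ} (ul uf : Fin m → Fin n → ℝ) (δ : ℝ) : ℝ :=
  sSup (valBR ul uf δ '' simplex m)

/-- The SSE leader utility `u_SSE = sup_{x ∈ Δ^m} max_{j ∈ BR_0(x)} u_l(x, j)`. -/
def uSSE {m n : ℕ} (ul uf : Fin m → Fin n → ℝ) : ℝ :=
  sSup ((fun x => sSup (mixU ul x '' BR0 uf x)) '' simplex m)

/-- The maximin leader utility `u_MM = sup_{x ∈ Δ^m} min_{j ∈ [n]} u_l(x, j)`. -/
def uMM {m n : ℕ} (ul : Fin m → Fin n → ℝ) : ℝ :=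
  sSup ((fun x => ⨅ j, mixU ul x j) '' simplex m)

/-- The inducibility gap
`Δ = min_{j} sup_{x ∈ Δ^m} min_{j' ≠ j} (u_f(x, j) - u_f(x, j'))`. -/
def indGap {m n : ℕ} (uf : Fin m → Fin n → ℝ) : ℝ :=
  ⨅ j, sSup ((fun x => ⨅ j' : {k : Fin n // k ≠ j}, (mixU uf x j - mixU uf x j'.1)) '' simplex m)

/-- The δ-best-response region of a subset `S` of follower actions. -/
def Xreg {m n : ℕ} (uf : Fin m → Fin n → ℝ) (δ : ℝ) (S : Set (Fin n)) :
    Set (Fin m → ℝ) :=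
  {x ∈ simplex m | BRd uf δ x = S}

/-!
For `δ > 0`, action `j` is the only `δ`-optimal response to `x` exactly when its margin over the
best other action is at least `δ`, so the region of `{j}` is a superlevel set of a continuous
function on the simplex. These shrink as `δ` grows, and strictly so as long as the value `δ` is
attained. The inducibility gap gives a point where the margin of `j` exceeds `δ`, and one where
another action beats `j`; the intermediate value theorem supplies a point with margin exactly `δ`.
-/

/-- The margin of `j`: the amount by which `f j` exceeds the largest of the other values of `f`,
negative when `j` does not maximize `f`. It is written as in `indGap`, so its value is the junk
value `0` when `j` is the only index. -/
def margin {ι : Type*} (f : ι → ℝ) (j : ι) : ℝ :=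
  ⨅ k : {k // k ≠ j}, (f j - f k)

section Margin

variable {ι : Type*} [Finite ι]

lemma margin_le_sub (f : ι → ℝ) {j k : ι} (hkj : k ≠ j) : margin f j ≤ f j - f k :=
  Finite.ciInf_le (fun k : {k // k ≠ j} ↦ f j - f k) ⟨k, hkj⟩

lemma margin_add_margin_nonpos (f : ι → ℝ) {j k : ι} (hkj : k ≠ j) :
    margin f j + margin f k ≤ 0 := by
  linarith [margin_le_sub f hkj, margin_le_sub f hkj.symm]

lemma le_margin_iff [Nontrivial ι] {f : ι → ℝ} {j : ι} {c : ℝ} :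
    c ≤ margin f j ↔ ∀ k ≠ j, c ≤ f j - f k :=
  have : Nonempty {k // k ≠ j} := nonempty_subtype.2 (exists_ne j)
  (le_ciInf_iff (Set.finite_range _).bddBelow).trans Subtype.forall

lemma continuous_margin (j : ι) : Continuous fun f : ι → ℝ ↦ margin f j := by
  cases nonempty_fintype {k // k ≠ j}
  rcases isEmpty_or_nonempty {k // k ≠ j} with _ | _
  · simpa only [margin, Real.iInf_of_isEmpty] using continuous_const
  · simp only [margin, ← Finset.inf'_univ_eq_ciInf]
    exact Continuous.finset_inf'_apply _ fun _ _ ↦ by fun_prop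

lemma ofPred_iSup_sub_lt_eq_singleton_iff [Nontrivial ι] {f : ι → ℝ} {j : ι} {δ : ℝ}
    (hδ : 0 < δ) : {k | (⨆ i, f i) - δ < f k} = {j} ↔ δ ≤ margin f j := by
  rw [le_margin_iff]
  constructor
  · intro hj k hkj
    obtain ⟨i, hi⟩ := exists_eq_ciSup_of_finite (f := f)
    obtain rfl : i = j := hj.subset (show (⨆ i, f i) - δ < f i by linarith)
    have hk : ¬ (⨆ i, f i) - δ < f k := fun hk ↦ hkj (hj.subset hk)
    linarith
  · intro hj
    have hmax : ⨆ i, f i = f j := by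
      refine le_antisymm (ciSup_le fun k ↦ ?_) (Finite.le_ciSup f j)
      obtain rfl | hkj := eq_or_ne k j
      · exact le_rfl
      · linarith [hj k hkj]
    refine Subset.antisymm (fun k hk ↦ ?_) (singleton_subset_iff.2 ?_)
    · by_contra hkj
      linarith [hj k hkj, mem_ofPred.1 hk]
    · simpa only [mem_ofPred_eq, hmax, sub_lt_self_iff] using hδ

end Margin

section Game

variable {m n : ℕ} {uf : Fin m → Fin n → ℝ} {δ : ℝ}

lemma continuous_mixU (u : Fin m → Fin n → ℝ) : Continuous (mixU u) := by
  unfold mixU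
  fun_prop

lemma mem_Xreg_singleton_iff [Nontrivial (Fin n)] {j : Fin n} (hδ : 0 < δ) {x : Fin m → ℝ} :
    x ∈ Xreg uf δ {j} ↔ x ∈ simplex m ∧ δ ≤ margin (mixU uf x) j :=
  and_congr_right fun _ ↦ ofPred_iSup_sub_lt_eq_singleton_iff hδ

lemma exists_lt_margin_of_lt_indGap [NeZero m] (hδΔ : δ < indGap uf) (j : Fin n) :
    ∃ x ∈ simplex m, δ < margin (mixU uf x) j := by
  have hsimplex : (simplex m).Nonempty := ⟨_, single_mem_stdSimplex ℝ 0⟩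
  have hsup : δ < sSup ((fun x ↦ margin (mixU uf x) j) '' simplex m) :=
    hδΔ.trans_le (Finite.ciInf_le _ j)
  simpa only [exists_mem_image] using exists_lt_of_lt_csSup (hsimplex.image _) hsup

lemma exists_margin_eq_of_lt_indGap [NeZero m] [Nontrivial (Fin n)] (hδ : 0 < δ)
    (hδΔ : δ < indGap uf) (j : Fin n) : ∃ x ∈ simplex m, margin (mixU uf x) j = δ := by
  obtain ⟨k, hkj⟩ := exists_ne j
  obtain ⟨a, ha, hja⟩ := exists_lt_margin_of_lt_indGap hδΔ j
  obtain ⟨b, hb, hkb⟩ := exists_lt_margin_of_lt_indGap hδΔ k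
  have hjb : margin (mixU uf b) j ≤ δ := by
    linarith [margin_add_margin_nonpos (mixU uf b) hkj]
  have hcont : Continuous fun x ↦ margin (mixU uf x) j :=
    (continuous_margin j).comp (continuous_mixU uf)
  exact (convex_stdSimplex ℝ (Fin m)).isPreconnected.intermediate_value hb ha
    hcont.continuousOn ⟨hjb, hja.le⟩

theorem singleton_region_nonempty_strict_antitone_general [NeZero m] [Nontrivial (Fin n)]
    (hδ : 0 < δ) (hδΔ : δ < indGap uf) (j : Fin n) :
    (Xreg uf δ {j}).Nonempty ∧ ∀ δ' : ℝ, δ < δ' → Xreg uf δ' {j} ⊂ Xreg uf δ {j} := by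
  obtain ⟨x, hx, hxδ⟩ := exists_margin_eq_of_lt_indGap hδ hδΔ j
  have hmem : x ∈ Xreg uf δ {j} := (mem_Xreg_singleton_iff hδ).2 ⟨hx, hxδ.ge⟩
  refine ⟨⟨x, hmem⟩, fun δ' hδδ' ↦ ssubset_iff_exists.2 ⟨fun y hy ↦ ?_, x, hmem, fun hx' ↦ ?_⟩⟩
  · have ⟨hy_simplex, hyδ'⟩ := (mem_Xreg_singleton_iff (hδ.trans hδδ')).1 hy
    exact (mem_Xreg_singleton_iff hδ).2 ⟨hy_simplex, hδδ'.le.trans hyδ'⟩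
  · have ⟨_, hxδ'⟩ := (mem_Xreg_singleton_iff (hδ.trans hδδ')).1 hx'
    linarith

end Game

/-- singleton δ-best-response regions are nonempty and strictly
shrink as δ increases within `(0, Δ)`. -/
theorem singleton_region_nonempty_strict_antitone (m n : ℕ) (hm : 1 ≤ m) (hn : 2 ≤ n)
    (uf : Fin m → Fin n → ℝ) (huf : ∀ i j, uf i j ∈ Set.Icc (0:ℝ) 1)
    (hΔ : 0 < indGap uf) (j : Fin n) (δ : ℝ) (hδ : 0 < δ) (hδΔ : δ < indGap uf) :
    (Xreg uf δ {j}).Nonempty ∧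
    ∀ δ' : ℝ, δ < δ' → δ' < indGap uf →
      Xreg uf δ' {j} ⊆ Xreg uf δ {j} ∧ ∃ x ∈ Xreg uf δ {j}, x ∉ Xreg uf δ' {j} := by
  have : NeZero m := ⟨by lia⟩
  have : Nontrivial (Fin n) := Fin.nontrivial_iff_two_le.2 hn
  obtain ⟨hne, hssub⟩ := singleton_region_nonempty_strict_antitone_general hδ hδΔ j
  exact ⟨hne, fun δ' hδδ' _ ↦ ssubset_iff_exists.1 (hssub δ' hδδ')⟩
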